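/- arXiv:1805.05460 — 6 statements merged into one kernel-verified Lean document; each statement's English description precedes it below -/
import Mathlib

section
/- Let η : ℝ × ℝ³ → ℝ³ be of class C² and suppose that for each t the map η(t, ·) : ℝ³ → ℝ³ is a bijection whose spatial derivative D_x η(t, x) is invertible with det D_x η(t, x) = 1 for all x, and whose inverse map is differentiable. Then the spatial velocity field v(t, y) = ∂_t η(t, η(t,·)⁻¹(y)) is divergence-free: for every t and every y ∈ ℝ³, div_y v(t, y) = 0. -/
theorem trace_zero_of_det_one (B : ℝ → Matrix (Fin 3) (Fin 3) ℝ) (B' : Matrix (Fin 3) (Fin 3) ℝ)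
    (t : ℝ) (hB : ∀ i j, HasDerivAt (fun s => B s i j) (B' i j) t) (h1 : B t = 1)
    (hd : ∀ s, (B s).det = 1) : B'.trace = 0 := by
  have hc : HasDerivAt (fun s => (B s).det) 0 t := by
    simp only [hd]; exact hasDerivAt_const t 1
  simp only [Matrix.det_fin_three] at hc
  have H := (((((((hB 0 0).mul (hB 1 1)).mul (hB 2 2)).sub
    (((hB 0 0).mul (hB 1 2)).mul (hB 2 1))).sub
    (((hB 0 1).mul (hB 1 0)).mul (hB 2 2))).add
    (((hB 0 1).mul (hB 1 2)).mul (hB 2 0))).add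
    (((hB 0 2).mul (hB 1 0)).mul (hB 2 1))).sub
    (((hB 0 2).mul (hB 1 1)).mul (hB 2 0))
  have := hc.unique H
  simp [h1, Matrix.one_apply] at this
  rw [Matrix.trace_fin_three]
  linarith

/-- For a `C²` incompressible motion `η : ℝ × ℝ³ → ℝ³` (each `η (t, ·)` a bijection with
inverse `ηinv t`, invertible spatial derivative of determinant `1`, differentiable inverse),
the spatial velocity field `v (t, y) = ∂ₜ η (t, ηinv t y)` is divergence-free. -/
theorem spatial_velocity_divergence_free
    (η : ℝ × (Fin 3 → ℝ) → (Fin 3 → ℝ))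
    (ηinv : ℝ → (Fin 3 → ℝ) → (Fin 3 → ℝ))
    (hC2 : ContDiff ℝ 2 η)
    (hli : ∀ t, Function.LeftInverse (ηinv t) (fun x => η (t, x)))
    (hri : ∀ t, Function.RightInverse (ηinv t) (fun x => η (t, x)))
    (hinv : ∀ t x, IsUnit
      ((fderiv ℝ (fun x' => η (t, x')) x).toLinearMap : Module.End ℝ (Fin 3 → ℝ)))
    (hdet : ∀ t x, LinearMap.det (fderiv ℝ (fun x' => η (t, x')) x).toLinearMap = 1)
    (hinvdiff : ∀ t, Differentiable ℝ (ηinv t)) :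
    ∀ (t : ℝ) (y : Fin 3 → ℝ),
      LinearMap.trace ℝ (Fin 3 → ℝ)
        (fderiv ℝ (fun z => deriv (fun s => η (s, ηinv t z)) t) y).toLinearMap = 0 := by
  intro t y
  set x0 := ηinv t y with hx0
  have hd : Differentiable ℝ η := hC2.differentiable (by norm_num)
  have hd1 : Differentiable ℝ (fderiv ℝ η) :=
    (hC2.fderiv_right (m := 1) (by norm_num)).differentiable (by norm_num)
  have hsp : ∀ s x, HasFDerivAt (fun x' => η (s, x'))
      ((fderiv ℝ η (s, x)).comp (ContinuousLinearMap.inr ℝ ℝ (Fin 3 → ℝ))) x := fun s x =>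
    (hd (s, x)).hasFDerivAt.comp x (hasFDerivAt_prodMk_right s x)
  have htm : ∀ s x, HasDerivAt (fun s' => η (s', x)) (fderiv ℝ η (s, x) (1, 0)) s := fun s x => by
    have := ((hd (s, x)).hasFDerivAt.comp s (hasFDerivAt_prodMk_left s x)).hasDerivAt
    simp at this
    exact this
  set G := fderiv ℝ (ηinv t) y with hG
  have hGd : HasFDerivAt (ηinv t) G y := (hinvdiff t y).hasFDerivAt
  set A : ℝ → (Fin 3 → ℝ) →L[ℝ] (Fin 3 → ℝ) := fun s =>
    (fderiv ℝ η (s, x0)).comp (ContinuousLinearMap.inr ℝ ℝ (Fin 3 → ℝ)) with hA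
  have hAdet : ∀ s, LinearMap.det (A s).toLinearMap = 1 := fun s => by
    have := hdet s x0
    rwa [(hsp s x0).fderiv] at this
  have hAG : (A t).comp G = ContinuousLinearMap.id ℝ _ := by
    have h1 : HasFDerivAt (fun z => η (t, ηinv t z)) ((A t).comp G) y := (hsp t x0).comp y hGd
    have h2 : (fun z => η (t, ηinv t z)) = id := funext fun z => hri t z
    rw [h2] at h1
    exact h1.unique (hasFDerivAt_id y)
  set D2 := fderiv ℝ (fderiv ℝ η) (t, x0) with hD2
  have hD2d : HasFDerivAt (fderiv ℝ η) D2 (t, x0) := (hd1 _).hasFDerivAt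
  have hsymm : ∀ u v, D2 u v = D2 v u :=
    second_derivative_symmetric (fun p => (hd p).hasFDerivAt) hD2d
  have hv : HasFDerivAt (fun z => deriv (fun s => η (s, ηinv t z)) t)
      ((((ContinuousLinearMap.apply ℝ (Fin 3 → ℝ) ((1, 0) : ℝ × (Fin 3 → ℝ))).comp D2).comp
        (ContinuousLinearMap.inr ℝ ℝ (Fin 3 → ℝ))).comp G) y := by
    have e : (fun z => deriv (fun s => η (s, ηinv t z)) t) =
        fun z => fderiv ℝ η (t, ηinv t z) (1, 0) := funext fun z => (htm t _).deriv
    rw [e]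
    have h1 : HasFDerivAt (fun x => fderiv ℝ η (t, x))
      (D2.comp (ContinuousLinearMap.inr ℝ ℝ (Fin 3 → ℝ))) x0 :=
      hD2d.comp x0 (hasFDerivAt_prodMk_right t x0)
    have h2 := h1.comp y hGd
    exact (ContinuousLinearMap.apply ℝ (Fin 3 → ℝ)
      ((1, 0) : ℝ × (Fin 3 → ℝ))).hasFDerivAt.comp y h2
  rw [hv.fderiv]
  set V := ((((ContinuousLinearMap.apply ℝ (Fin 3 → ℝ) ((1, 0) : ℝ × (Fin 3 → ℝ))).comp D2).comp
        (ContinuousLinearMap.inr ℝ ℝ (Fin 3 → ℝ))).comp G) with hV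
  have hVa : ∀ k, V k = D2 (1, 0) (0, G k) := fun k => by
    rw [hsymm]; simp [hV]
  have hT : HasDerivAt (fun s => fderiv ℝ η (s, x0)) (D2 (1, 0)) t := by
    have := (hD2d.comp t (hasFDerivAt_prodMk_left t x0)).hasDerivAt
    simp at this
    exact this
  have hBd : ∀ k, HasDerivAt (fun s => A s (G k)) (V k) t := fun k => by
    rw [hVa]
    exact (ContinuousLinearMap.apply ℝ (Fin 3 → ℝ)
      ((0, G k) : ℝ × (Fin 3 → ℝ))).hasFDerivAt.comp_hasDerivAt t hT
  rw [LinearMap.trace_eq_matrix_trace ℝ (Pi.basisFun ℝ (Fin 3))]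
  refine trace_zero_of_det_one (fun s => LinearMap.toMatrix (Pi.basisFun ℝ (Fin 3))
    (Pi.basisFun ℝ (Fin 3)) ((A s).comp G).toLinearMap) _ t ?_ ?_ ?_
  · intro i j
    simp only [LinearMap.toMatrix_apply]
    exact hasDerivAt_pi.1 (hBd _) i
  · simp only [hAG]
    exact LinearMap.toMatrix_id _
  · intro s
    rw [LinearMap.det_toMatrix]
    have h1 : LinearMap.det ((A t).comp G).toLinearMap = 1 := by
      rw [hAG]; exact LinearMap.det_id
    rw [ContinuousLinearMap.toLinearMap_comp, LinearMap.det_comp, hAdet] at h1 ⊢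
    exact h1
end

section
/- Let p₀, …, p_n be affinely independent points in ℝⁿ and let x₀, …, x_n : ℝⁿ → ℝ be the barycentric coordinate functions, i.e. the unique affine maps with x_i(p_j) = δ_{ij}; their gradients ∇x_i are constant vectors. For a < b let γ_{ab}(t) = (1−t) p_a + t p_b. Then ∫₀¹ [ x₀(γ_{ab}(t)) ⟨∇x₁, p_b − p_a⟩ − x₁(γ_{ab}(t)) ⟨∇x₀, p_b − p_a⟩ ] dt equals 1 if (a,b) = (0,1), and equals 0 for every other edge (a,b) with a < b. -/
/-- Duality between Whitney edge fields and edges of a simplex: the line integral of the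
Whitney edge field `W_{[p₀,p₁]} = x₀ ∇x₁ − x₁ ∇x₀` along the oriented edge `[p_a, p_b]`
(`a < b`) is `1` if `(a,b) = (0,1)` and `0` otherwise. Here the `x_i` are the barycentric
coordinate (affine) functions of affinely independent points `p₀, …, p_n` in `ℝⁿ`, and
`⟨∇x_i, w⟩` is the linear part of `x_i` applied to `w`. -/
theorem whitney_edge_duality (n : ℕ) (hn : 1 ≤ n)
    (p : Fin (n + 1) → (Fin n → ℝ)) (hp : AffineIndependent ℝ p)
    (x : Fin (n + 1) → ((Fin n → ℝ) →ᵃ[ℝ] ℝ))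
    (hx : ∀ i j, x i (p j) = if i = j then 1 else 0)
    (a b : Fin (n + 1)) (hab : a < b) :
    (∫ t in (0:ℝ)..1,
        (x 0 ((1 - t) • p a + t • p b) * (x 1).linear (p b - p a)
          - x 1 ((1 - t) • p a + t • p b) * (x 0).linear (p b - p a)))
      = if a = 0 ∧ b = 1 then 1 else 0 := by
  have hl : ∀ i, (x i).linear (p b - p a) = x i (p b) - x i (p a) := fun i => by
    simpa using (x i).linearMap_vsub (p b) (p a)
  have hg : ∀ i (t : ℝ), x i ((1 - t) • p a + t • p b)
      = (1 - t) * x i (p a) + t * x i (p b) := fun i t => by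
    have h := (x i).apply_lineMap (p a) (p b) t
    rw [AffineMap.lineMap_apply_module, AffineMap.lineMap_apply_module] at h
    simpa using h
  have hc : ∀ t : ℝ, (x 0 ((1 - t) • p a + t • p b) * (x 1).linear (p b - p a)
          - x 1 ((1 - t) • p a + t • p b) * (x 0).linear (p b - p a))
      = x 0 (p a) * x 1 (p b) - x 1 (p a) * x 0 (p b) := fun t => by
    rw [hl, hl, hg, hg]; ring
  have hb : (0 : Fin (n + 1)) ≠ b := (lt_of_le_of_lt (Fin.zero_le a) hab).ne
  simp only [hc, intervalIntegral.integral_const, hx, if_neg hb, eq_comm (a := a), eq_comm (a := b)]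
  by_cases h0 : 0 = a <;> by_cases h1 : 1 = b <;> simp [h0, h1]
end

section
/- Let p₀, p₁, p₂, p₃ be affinely independent points in ℝ³, let x₀, …, x₃ : ℝ³ → ℝ be the barycentric coordinate functions (the unique affine maps with x_i(p_j) = δ_{ij}), with constant gradients g_i = ∇x_i, and let W = 2( x₀ g₁ × g₂ + x₁ g₂ × g₀ + x₂ g₀ × g₁ ) be the Whitney face field of the face [p₀, p₁, p₂]. Then W has constant divergence, equal to div W = −6 / det M, where M is the 3×3 matrix with columns p₁ − p₀, p₂ − p₀, p₃ − p₀. -/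
/-- The constant gradient of an affine function `x : ℝ³ → ℝ`, as a vector. -/
noncomputable def bgrad (x : (Fin 3 → ℝ) →ᵃ[ℝ] ℝ) : Fin 3 → ℝ :=
  fun k => x.linear (Pi.single k 1)

/-- The Whitney face field of the face `[p_a, p_b, p_c]`, for barycentric coordinate
functions `x` of a tetrahedron:
`W = 2 (x_a ∇x_b × ∇x_c + x_b ∇x_c × ∇x_a + x_c ∇x_a × ∇x_b)`. -/
noncomputable def Wface (x : Fin 4 → ((Fin 3 → ℝ) →ᵃ[ℝ] ℝ)) (a b c : Fin 4)
    (y : Fin 3 → ℝ) : Fin 3 → ℝ :=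
  (2 : ℝ) • (x a y • crossProduct (bgrad (x b)) (bgrad (x c))
    + x b y • crossProduct (bgrad (x c)) (bgrad (x a))
    + x c y • crossProduct (bgrad (x a)) (bgrad (x b)))

theorem bgrad_hasFDerivAt (f : (Fin 3 → ℝ) →ᵃ[ℝ] ℝ) (y : Fin 3 → ℝ) :
    HasFDerivAt (fun z => f z) (LinearMap.toContinuousLinearMap f.linear) y := by
  have h : (fun z => f z) = fun z => LinearMap.toContinuousLinearMap f.linear z + f 0 := by
    funext z
    have := congrFun (AffineMap.decomp f) z
    simpa using this
  rw [h]
  exact (ContinuousLinearMap.hasFDerivAt _).add_const _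

theorem bgrad_apply (f : (Fin 3 → ℝ) →ᵃ[ℝ] ℝ) (a b : Fin 3 → ℝ) :
    f a - f b = ∑ k, bgrad f k * (a k - b k) := by
  have h : f a - f b = f.linear (a - b) := by
    simpa using (f.linearMap_vsub a b).symm
  rw [h, LinearMap.pi_apply_eq_sum_univ f.linear (a - b)]
  refine Finset.sum_congr rfl fun k _ => ?_
  have : (fun j => if k = j then (1:ℝ) else 0) = Pi.single k 1 := by
    funext j
    simp [Pi.single_apply, eq_comm]
  simp [bgrad, this, mul_comm]

/-- The Whitney face field `W_{[p₀,p₁,p₂]}` of a tetrahedron with affinely independent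
vertices `p₀, p₁, p₂, p₃` has constant divergence `−6 / det M`, where `M` has columns
`p₁ − p₀, p₂ − p₀, p₃ − p₀`. -/
theorem whitney_face_field_div (p : Fin 4 → (Fin 3 → ℝ)) (hp : AffineIndependent ℝ p)
    (x : Fin 4 → ((Fin 3 → ℝ) →ᵃ[ℝ] ℝ))
    (hx : ∀ i j, x i (p j) = if i = j then 1 else 0) :
    ∀ y : Fin 3 → ℝ,
      ∑ i : Fin 3, fderiv ℝ (fun z => Wface x 0 1 2 z i) y (Pi.single i 1)
        = -6 / (Matrix.of fun (i j : Fin 3) => p j.succ i - p 0 i).det := by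
  intro y
  have hd : ∀ i : Fin 3, fderiv ℝ (fun z => Wface x 0 1 2 z i) y (Pi.single i 1)
      = 2 * (bgrad (x 0) i * crossProduct (bgrad (x 1)) (bgrad (x 2)) i
        + bgrad (x 1) i * crossProduct (bgrad (x 2)) (bgrad (x 0)) i
        + bgrad (x 2) i * crossProduct (bgrad (x 0)) (bgrad (x 1)) i) := by
    intro i
    have h := ((((bgrad_hasFDerivAt (x 0) y).mul_const
        (crossProduct (bgrad (x 1)) (bgrad (x 2)) i)).add
      ((bgrad_hasFDerivAt (x 1) y).mul_const
        (crossProduct (bgrad (x 2)) (bgrad (x 0)) i))).add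
      ((bgrad_hasFDerivAt (x 2) y).mul_const
        (crossProduct (bgrad (x 0)) (bgrad (x 1)) i))).const_mul 2
    have h2 : HasFDerivAt (fun z => Wface x 0 1 2 z i) _ y := h
    rw [h2.fderiv]
    simp [bgrad]
    ring
  simp only [hd]
  set G : Matrix (Fin 3) (Fin 3) ℝ :=
    Matrix.of fun i k => bgrad (x i.castSucc) k with hG
  set M : Matrix (Fin 3) (Fin 3) ℝ := Matrix.of fun (i j : Fin 3) => p j.succ i - p 0 i with hM
  have hGM : G * M = !![-1, -1, -1; 1, 0, 0; 0, 1, 0] := by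
    have e : ∀ i j, (G * M) i j = x i.castSucc (p j.succ) - x i.castSucc (p 0) := by
      intro i j
      rw [bgrad_apply, Matrix.mul_apply]
      rfl
    ext i j
    rw [e, hx, hx]
    fin_cases i <;> fin_cases j <;> simp [Fin.ext_iff]
  have hdet : G.det * M.det = -1 := by
    rw [← Matrix.det_mul, hGM]
    simp [Matrix.det_fin_three]
  have hM0 : M.det ≠ 0 := by
    intro h
    rw [h] at hdet
    norm_num at hdet
  rw [eq_div_iff hM0]
  have hs : ∑ i : Fin 3, 2 * (bgrad (x 0) i * crossProduct (bgrad (x 1)) (bgrad (x 2)) i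
        + bgrad (x 1) i * crossProduct (bgrad (x 2)) (bgrad (x 0)) i
        + bgrad (x 2) i * crossProduct (bgrad (x 0)) (bgrad (x 1)) i) = 6 * G.det := by
    have g0 : ∀ k, G 0 k = bgrad (x 0) k := fun _ => rfl
    have g1 : ∀ k, G 1 k = bgrad (x 1) k := fun _ => rfl
    have g2 : ∀ k, G 2 k = bgrad (x 2) k := fun _ => rfl
    rw [Matrix.det_fin_three]
    simp only [g0, g1, g2, Fin.sum_univ_three, cross_apply, Matrix.cons_val]
    ring
  rw [hs]
  linarith
end

section
/- Let p₀, p₁, p₂, p₃ be affinely independent points in ℝ³ with barycentric coordinate functions x₀, …, x₃ and constant gradients g_i = ∇x_i, and let W = W_{[p₀,p₁,p₂]} = 2( x₀ g₁ × g₂ + x₁ g₂ × g₀ + x₂ g₀ × g₁ ). For a face [p_a, p_b, p_c] with a < b < c, define its flux integral as ∫_T ⟨ W( p_a + s(p_b − p_a) + t(p_c − p_a) ), (p_b − p_a) × (p_c − p_a) ⟩ ds dt, where T = {(s,t) : s ≥ 0, t ≥ 0, s + t ≤ 1}. Then this flux equals 1 for the face [p₀, p₁, p₂], and equals 0 for each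 of the other three faces [p₀, p₁, p₃], [p₀, p₂, p₃], [p₁, p₂, p₃] of the tetrahedron. -/
/-- The flux of the vector field `W` through the oriented face `[p_a, p_b, p_c]`:
`∫_T ⟨W(p_a + s(p_b − p_a) + t(p_c − p_a)), (p_b − p_a) × (p_c − p_a)⟩ ds dt` over the
standard triangle `T = {(s,t) : s ≥ 0, t ≥ 0, s + t ≤ 1}`. -/
noncomputable def faceFlux (W : (Fin 3 → ℝ) → (Fin 3 → ℝ))
    (p : Fin 4 → (Fin 3 → ℝ)) (a b c : Fin 4) : ℝ :=
  ∫ q in {q : ℝ × ℝ | 0 ≤ q.1 ∧ 0 ≤ q.2 ∧ q.1 + q.2 ≤ 1},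
    ∑ i : Fin 3,
      W (p a + q.1 • (p b - p a) + q.2 • (p c - p a)) i
        * crossProduct (p b - p a) (p c - p a) i

open MeasureTheory in
lemma tri_vol : (volume {q : ℝ × ℝ | 0 ≤ q.1 ∧ 0 ≤ q.2 ∧ q.1 + q.2 ≤ 1}) = ENNReal.ofReal (1/2) := by
  have hm : MeasurableSet {q : ℝ × ℝ | 0 ≤ q.1 ∧ 0 ≤ q.2 ∧ q.1 + q.2 ≤ 1} := by
    apply IsClosed.measurableSet
    exact (isClosed_le continuous_const continuous_fst).inter
      ((isClosed_le continuous_const continuous_snd).inter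
        (isClosed_le (continuous_fst.add continuous_snd) continuous_const))
  rw [Measure.volume_eq_prod, Measure.prod_apply hm]
  have h : ∀ s : ℝ, volume (Prod.mk s ⁻¹' {q : ℝ × ℝ | 0 ≤ q.1 ∧ 0 ≤ q.2 ∧ q.1 + q.2 ≤ 1})
      = (Set.Ioc (0:ℝ) 1).indicator (fun s => ENNReal.ofReal (1 - s)) s
        + ({0} : Set ℝ).indicator (fun _ => 1) s := by
    intro s
    by_cases h0 : 0 ≤ s
    · have : Prod.mk s ⁻¹' {q : ℝ × ℝ | 0 ≤ q.1 ∧ 0 ≤ q.2 ∧ q.1 + q.2 ≤ 1} = Set.Icc 0 (1 - s) := by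
        ext t
        simp only [Set.mem_preimage, Set.mem_ofPred_eq, Set.mem_Icc]
        constructor
        · rintro ⟨_, h1, h2⟩
          exact ⟨h1, by linarith⟩
        · rintro ⟨h1, h2⟩
          exact ⟨h0, h1, by linarith⟩
      rw [this, Real.volume_Icc]
      rcases h0.eq_or_lt with rfl | h0
      · simp
      · by_cases h1 : s ≤ 1
        · simp [Set.indicator, h0, h1, h0.ne']
        · have : 1 - s - 0 ≤ 0 := by linarith
          rw [ENNReal.ofReal_of_nonpos this]
          simp [Set.indicator, h1, h0.ne']
    · have : Prod.mk s ⁻¹' {q : ℝ × ℝ | 0 ≤ q.1 ∧ 0 ≤ q.2 ∧ q.1 + q.2 ≤ 1} = ∅ := by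
        ext t
        simp [h0]
      have h1 : ¬ 0 < s := fun h => h0 h.le
      have h2 : s ≠ 0 := fun h => h0 h.ge
      simp [this, Set.indicator, h1, h2]
  simp_rw [h]
  rw [lintegral_add_right _ (measurable_const.indicator (measurableSet_singleton 0)),
    lintegral_indicator measurableSet_Ioc, lintegral_indicator (measurableSet_singleton 0)]
  simp only [lintegral_const, Measure.restrict_singleton, Real.volume_singleton]
  rw [← ofReal_integral_eq_lintegral_ofReal]
  · rw [← intervalIntegral.integral_of_le zero_le_one]
    have : ∫ s in (0:ℝ)..1, (1 - s) = 1/2 := by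
      rw [intervalIntegral.integral_sub (by simp) (by simp)]
      norm_num
    rw [this]
    simp
  · exact (Continuous.integrableOn_Icc (by fun_prop)).mono_set Set.Ioc_subset_Icc_self
  · filter_upwards [ae_restrict_mem measurableSet_Ioc] with s hs
    simpa using hs.2

lemma lin_eq (f : (Fin 3 → ℝ) →ᵃ[ℝ] ℝ) (v : Fin 3 → ℝ) :
    f.linear v = bgrad f 0 * v 0 + bgrad f 1 * v 1 + bgrad f 2 * v 2 := by
  conv_lhs => rw [pi_eq_sum_univ' v]
  rw [map_sum, Fin.sum_univ_three]
  simp only [map_smul, bgrad, smul_eq_mul]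
  ring

lemma integrand_eq (x : Fin 4 → ((Fin 3 → ℝ) →ᵃ[ℝ] ℝ)) (y u v : Fin 3 → ℝ) :
    ∑ i : Fin 3, Wface x 0 1 2 y i * crossProduct u v i =
    2 * (x 0 y * ((x 1).linear u * (x 2).linear v - (x 1).linear v * (x 2).linear u)
      + x 1 y * ((x 2).linear u * (x 0).linear v - (x 2).linear v * (x 0).linear u)
      + x 2 y * ((x 0).linear u * (x 1).linear v - (x 0).linear v * (x 1).linear u)) := by
  simp only [lin_eq, Wface, Fin.sum_univ_three, cross_apply, Pi.smul_apply, Pi.add_apply,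
    smul_eq_mul, Matrix.cons_val]
  ring

lemma val_eq (f : (Fin 3 → ℝ) →ᵃ[ℝ] ℝ) (a b c : Fin 3 → ℝ) (s t : ℝ) :
    f (a + s • (b - a) + t • (c - a)) = f a + s * (f b - f a) + t * (f c - f a) := by
  have : a + s • (b - a) + t • (c - a) = (s • (b - a) + t • (c - a)) +ᵥ a := by
    simp only [vadd_eq_add]; abel
  rw [this, f.map_vadd, map_add, map_smul, map_smul, ← vsub_eq_sub, ← vsub_eq_sub,
    f.linearMap_vsub, f.linearMap_vsub]
  simp only [vadd_eq_add, vsub_eq_sub, smul_eq_mul]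
  ring

/-- Duality between Whitney face fields and the faces of a tetrahedron: the flux of
`W_{[p₀,p₁,p₂]}` through the face `[p₀,p₁,p₂]` is `1`, and its flux through each of the
other three faces `[p₀,p₁,p₃]`, `[p₀,p₂,p₃]`, `[p₁,p₂,p₃]` is `0`. -/
theorem whitney_face_duality (p : Fin 4 → (Fin 3 → ℝ)) (hp : AffineIndependent ℝ p)
    (x : Fin 4 → ((Fin 3 → ℝ) →ᵃ[ℝ] ℝ))
    (hx : ∀ i j, x i (p j) = if i = j then 1 else 0) :
    faceFlux (Wface x 0 1 2) p 0 1 2 = 1 ∧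
    faceFlux (Wface x 0 1 2) p 0 1 3 = 0 ∧
    faceFlux (Wface x 0 1 2) p 0 2 3 = 0 ∧
    faceFlux (Wface x 0 1 2) p 1 2 3 = 0 := by
  have hl : ∀ i a b, (x i).linear (p b - p a) = x i (p b) - x i (p a) := by
    intro i a b
    rw [← vsub_eq_sub, (x i).linearMap_vsub, vsub_eq_sub]
  refine ⟨?_, ?_, ?_, ?_⟩
  · have : ∀ q : ℝ × ℝ, ∑ i : Fin 3,
        Wface x 0 1 2 (p 0 + q.1 • (p 1 - p 0) + q.2 • (p 2 - p 0)) i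
        * crossProduct (p 1 - p 0) (p 2 - p 0) i = 2 := by
      intro q
      rw [integrand_eq]
      simp only [val_eq, hl, hx]
      simp
      ring
    unfold faceFlux
    simp_rw [this]
    rw [MeasureTheory.setIntegral_const, MeasureTheory.measureReal_def, tri_vol,
      ENNReal.toReal_ofReal (by norm_num)]
    norm_num
  all_goals
    unfold faceFlux
    simp_rw [integrand_eq]
    simp only [val_eq, hl, hx]
    simp
end

section
/- Let p₀, p₁, p₂, p₃ be affinely independent points in ℝ³ with barycentric coordinate functions x₀, …, x₃ and constant gradients g_i = ∇x_i. Then the Whitney face fields of the two faces of the tetrahedron containing the edge [p₀, p₁] sum to a constant field: W_{[p₀,p₁,p₂]}(y) + W_{[p₀,p₁,p₃]}(y) = 2 g₀ × g₁ for every y ∈ ℝ³; that is, their sum equals the curl 2 ∇x₀ × ∇x₁ of the Whitney edge field W_{[p₀,p₁]} = x₀ ∇x₁ − x₁ ∇x₀. -/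
/-- For a tetrahedron with affinely independent vertices `p₀, …, p₃`, the Whitney face
fields of the two faces containing the edge `[p₀, p₁]` sum to the constant field
`2 ∇x₀ × ∇x₁`, the curl of the Whitney edge field `W_{[p₀,p₁]} = x₀ ∇x₁ − x₁ ∇x₀`. -/
theorem whitney_face_fields_sum_eq_curl_edge
    (p : Fin 4 → (Fin 3 → ℝ)) (hp : AffineIndependent ℝ p)
    (x : Fin 4 → ((Fin 3 → ℝ) →ᵃ[ℝ] ℝ))
    (hx : ∀ i j, x i (p j) = if i = j then 1 else 0) :
    ∀ y : Fin 3 → ℝ,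
      Wface x 0 1 2 y + Wface x 0 1 3 y
        = (2 : ℝ) • crossProduct (bgrad (x 0)) (bgrad (x 1)) := by
  have htop : affineSpan ℝ (Set.range p) = ⊤ := by
    rw [hp.affineSpan_eq_top_iff_card_eq_finrank_add_one]
    simp
  have hS : ∀ y, (x 0 + x 1 + x 2 + x 3) y = 1 := by
    intro y
    have hle : affineSpan ℝ (Set.range p) ≤
        (affineSpan ℝ ({1} : Set ℝ)).comap (x 0 + x 1 + x 2 + x 3) := by
      rw [affineSpan_le]
      rintro _ ⟨j, rfl⟩
      fin_cases j <;> simp [hx]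
    have hy : y ∈ affineSpan ℝ (Set.range p) := by
      rw [htop]
      exact AffineSubspace.mem_top ℝ _ y
    simpa using hle hy
  have hL : ∀ v, (x 0).linear v + (x 1).linear v + (x 2).linear v + (x 3).linear v = 0 := by
    intro v
    have h := (x 0 + x 1 + x 2 + x 3).map_vadd 0 v
    rw [hS, hS] at h
    simpa using h
  have hg : bgrad (x 3) = -(bgrad (x 0) + bgrad (x 1) + bgrad (x 2)) := by
    funext k
    have h := hL (Pi.single k 1)
    simp only [bgrad, Pi.neg_apply, Pi.add_apply]
    linarith
  intro y
  have h3 : x 3 y = 1 - x 0 y - x 1 y - x 2 y := by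
    have h := hS y
    simp only [AffineMap.coe_add, Pi.add_apply] at h
    linarith
  unfold Wface
  rw [hg, h3]
  generalize bgrad (x 0) = a
  generalize bgrad (x 1) = b
  generalize bgrad (x 2) = c
  ext k
  fin_cases k <;> simp [cross_apply] <;> ring
end

section
/- Let p₀, p₁, p₂, p₃ be affinely independent points in ℝ³ with barycentric coordinate functions x₀, …, x₃ and constant gradients g_i = ∇x_i, and for k = 0, 1, 2, 3 let W_{f_k} be the Whitney face field of the face f_k of the tetrahedron obtained by omitting the vertex p_k (vertices in increasing order). If real coefficients c₀, c₁, c₂, c₃ satisfy ∑_{k=0}^{3} c_k W_{f_k}(y) = 0 for every y in the convex hull of {p₀, p₁, p₂, p₃}, then c₀ = c₁ = c₂ = c₃ = 0. In particular, the four Whitney face fields of a tetrahedron are linearly independent. -/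
theorem bgrad_dot (x : (Fin 3 → ℝ) →ᵃ[ℝ] ℝ) (u v : Fin 3 → ℝ) :
    ∑ k, bgrad x k * (u - v) k = x u - x v := by
  have h := x.linearMap_vsub u v
  simp only [vsub_eq_sub] at h
  rw [← h, LinearMap.pi_apply_eq_sum_univ x.linear (u - v)]
  refine Finset.sum_congr rfl fun k _ => ?_
  have : (Pi.single k 1 : Fin 3 → ℝ) = fun j => if k = j then 1 else 0 := by
    ext j
    simp [Pi.single_apply, eq_comm]
  simp only [bgrad, this, smul_eq_mul]
  ring

/-- The four Whitney face fields of a tetrahedron (faces `f_k` omitting vertex `p_k`,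
vertices in increasing order) are linearly independent: if a linear combination vanishes
on the convex hull of the vertices, all coefficients vanish. -/
theorem whitney_face_fields_linearIndependent
    (p : Fin 4 → (Fin 3 → ℝ)) (hp : AffineIndependent ℝ p)
    (x : Fin 4 → ((Fin 3 → ℝ) →ᵃ[ℝ] ℝ))
    (hx : ∀ i j, x i (p j) = if i = j then 1 else 0)
    (c : Fin 4 → ℝ)
    (hc : ∀ y ∈ convexHull ℝ (Set.range p),
      c 0 • Wface x 1 2 3 y + c 1 • Wface x 0 2 3 y
        + c 2 • Wface x 0 1 3 y + c 3 • Wface x 0 1 2 y = 0) :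
    ∀ k, c k = 0 := by
  have hdet : (Matrix.of fun i k : Fin 3 => bgrad (x i.succ) k).det ≠ 0 := by
    have hm : (Matrix.of fun i k : Fin 3 => bgrad (x i.succ) k) *
        (Matrix.of fun k j : Fin 3 => (p j.succ - p 0) k) = 1 := by
      ext i j
      rw [Matrix.mul_apply]
      simp only [Matrix.of_apply]
      rw [bgrad_dot, hx, hx]
      simp [Matrix.one_apply]
    intro h0
    have := congrArg Matrix.det hm
    rw [Matrix.det_mul, h0, Matrix.det_one] at this
    simp at this
  rw [Matrix.det_fin_three] at hdet
  have e2 : (Fin.succ 1 : Fin 4) = 2 := rfl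
  have e3 : (Fin.succ 2 : Fin 4) = 3 := rfl
  simp only [Matrix.of_apply, Fin.succ_zero_eq_one, e2, e3] at hdet
  have h0 := hc (p 0) (subset_convexHull ℝ _ ⟨0, rfl⟩)
  have h1 := hc (p 1) (subset_convexHull ℝ _ ⟨1, rfl⟩)
  simp only [Wface, hx] at h0 h1
  generalize bgrad (x 0) = g0 at *
  generalize bgrad (x 1) = g1 at *
  generalize bgrad (x 2) = g2 at *
  generalize bgrad (x 3) = g3 at *
  have a0 := congrFun h0 0
  have a1 := congrFun h0 1
  have a2 := congrFun h0 2
  have b0 := congrFun h1 0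
  have b1 := congrFun h1 1
  have b2 := congrFun h1 2
  simp [cross_apply] at a0 a1 a2 b0 b1 b2
  have k1 : c 1 = 0 := by
    refine (mul_eq_zero.mp ?_).resolve_right hdet
    linear_combination (g1 0 * a0 + g1 1 * a1 + g1 2 * a2) / 2
  have k2 : c 2 = 0 := by
    refine (mul_eq_zero.mp ?_).resolve_right hdet
    linear_combination -(g2 0 * a0 + g2 1 * a1 + g2 2 * a2) / 2
  have k3 : c 3 = 0 := by
    refine (mul_eq_zero.mp ?_).resolve_right hdet
    linear_combination (g3 0 * a0 + g3 1 * a1 + g3 2 * a2) / 2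
  have k0 : c 0 = 0 := by
    refine (mul_eq_zero.mp ?_).resolve_right hdet
    simp only [k2, k3, zero_mul, add_zero] at b0 b1 b2
    linear_combination (g1 0 * b0 + g1 1 * b1 + g1 2 * b2) / 2
  intro k
  fin_cases k <;> assumption
end
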